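/- Let φ : ℂ → ℂ be analytic on the open disk {t : |t − 1| < R} for some R > 1, and let a, b, d be complex numbers such that b and d are not nonpositive integers or zero, d ≠ a, and f := d(b−a−1)/(d−a) is not a nonpositive integer or zero. Suppose the double series Σ_{k≥0} Σ_{n≥k} [(a)_k (d+1)_k / ((b)_k (d)_k k!)] · [(−1)^n (−n)_k / n!] · φ^{(n)}(1) is absolutely summable (so the order of summation may be interchanged). Then Σ_{k=0}^∞ (a)_k (d+1)_k φ^{(k)}(0) / ((b)_k (d)_k k!) = Σ_{k=0}^∞ (−1)^k (b−a−1)_k (f+1)_k φ^{(k)}(1) / ((b)_k (f)_k k!). -/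

import Mathlib

/-!
Expanding each `φ⁽ᵏ⁾(0)` in its Taylor series at `1` and summing along antidiagonals gives, for any
coefficients `c`, the transformation `∑ cₖ φ⁽ᵏ⁾(0) / k! = ∑ (Δⁿc)(0) φ⁽ⁿ⁾(1) / n!`, where `Δ` is the
forward difference. For `c = (a)ₖ / (b)ₖ` an induction gives
`(Δⁿc)(k) = (-1)ⁿ (b - a)ₙ (a)ₖ / (b)ₖ₊ₙ`, the Chu–Vandermonde sum. The extra factor
`(d + 1)ₖ / (d)ₖ = (d + k) / d` reduces to this case because
`(a)ₖ (d + k) = (d - a) (a)ₖ + a (a + 1)ₖ`.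
-/

/-- The Pochhammer symbol `(a)_k = a (a+1) ⋯ (a+k-1)`. -/
noncomputable def poch (a : ℂ) (k : ℕ) : ℂ := Polynomial.eval a (ascPochhammer ℂ k)

open Finset.HasAntidiagonal (antidiagonal)

section Pochhammer

theorem mul_ascPochhammer_eval_add_one {S : Type*} [CommSemiring S] (x : S) (k : ℕ) :
    x * (ascPochhammer S k).eval (x + 1) = (ascPochhammer S k).eval x * (x + k) := by
  rw [← ascPochhammer_succ_eval]
  simp [ascPochhammer_succ_left]

theorem ascPochhammer_eval_ne_zero {S : Type*} [CommRing S] [IsDomain S] {x : S}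
    (hx : ∀ n : ℕ, x ≠ -n) (k : ℕ) : (ascPochhammer S k).eval x ≠ 0 := by
  rw [Ne, ascPochhammer_eval_eq_zero_iff]
  rintro ⟨n, -, hn⟩
  exact hx n (by rw [hn, neg_neg])

variable {K : Type*} [Field K]

theorem ascPochhammer_eval_add_one_div {x : K} (hx : ∀ n : ℕ, x ≠ -n) (k : ℕ) :
    (ascPochhammer K k).eval (x + 1) / (ascPochhammer K k).eval x = (x + k) / x := by
  have hx₀ : x ≠ 0 := by simpa using hx 0
  rw [div_eq_div_iff (ascPochhammer_eval_ne_zero hx k) hx₀, mul_comm,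
    mul_ascPochhammer_eval_add_one, mul_comm]

theorem neg_one_pow_mul_ascPochhammer_eval_neg_div_factorial [CharZero K] (k m : ℕ) :
    (-1 : K) ^ (k + m) * (ascPochhammer K k).eval (-((k + m : ℕ) : K)) / (k + m).factorial =
      (-1) ^ m / m.factorial := by
  have hfact : (m.factorial : K) * (k + m).descFactorial k = (k + m).factorial := by
    have h := Nat.factorial_mul_descFactorial (Nat.le_add_right k m)
    rw [Nat.add_sub_cancel_left] at h
    exact_mod_cast h
  have hsign : (-1 : K) ^ k * (-1) ^ k = 1 := by rw [← mul_pow]; simp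
  have hm : (m.factorial : K) ≠ 0 := Nat.cast_ne_zero.2 m.factorial_ne_zero
  have hkm : ((k + m).factorial : K) ≠ 0 := Nat.cast_ne_zero.2 (k + m).factorial_ne_zero
  rw [ascPochhammer_eval_neg_eq_descPochhammer, descPochhammer_eval_eq_descFactorial,
    div_eq_div_iff hkm hm, ← hfact, pow_add]
  linear_combination (-1 : K) ^ m * m.factorial * (k + m).descFactorial k * hsign

theorem fwdDiff_iter_ascPochhammer_div (a : K) {b : K} (hb : ∀ n : ℕ, b ≠ -n) (n k : ℕ) :
    (fwdDiff 1)^[n] (fun j : ℕ ↦ (ascPochhammer K j).eval a / (ascPochhammer K j).eval b) k =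
      (-1) ^ n * (ascPochhammer K n).eval (b - a) * (ascPochhammer K k).eval a /
        (ascPochhammer K (k + n)).eval b := by
  induction n generalizing k with
  | zero => simp
  | succ n ih =>
    have h₀ := ascPochhammer_eval_ne_zero hb (k + n)
    have h₁ := ascPochhammer_eval_ne_zero hb (k + n + 1)
    rw [Function.iterate_succ_apply', fwdDiff, ih, ih, add_right_comm k 1 n, ← add_assoc k n 1,
      div_sub_div _ _ h₁ h₀, div_eq_div_iff (mul_ne_zero h₁ h₀) h₁]
    simp only [ascPochhammer_succ_eval]
    push_cast
    ring

theorem fwdDiff_iter_ascPochhammer_mul_add_one_div {a b d f : K}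
    (hf : f * (d - a) = d * (b - a - 1)) (hb : ∀ n : ℕ, b ≠ -n) (hd : ∀ n : ℕ, d ≠ -n)
    (hf' : ∀ n : ℕ, f ≠ -n) (n : ℕ) :
    (fwdDiff 1)^[n] (fun j : ℕ ↦ (ascPochhammer K j).eval a * (ascPochhammer K j).eval (d + 1) /
        ((ascPochhammer K j).eval b * (ascPochhammer K j).eval d)) 0 =
      (-1) ^ n * (ascPochhammer K n).eval (b - a - 1) * (ascPochhammer K n).eval (f + 1) /
        ((ascPochhammer K n).eval b * (ascPochhammer K n).eval f) := by
  have hd₀ : d ≠ 0 := by simpa using hd 0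
  have hf₀ : f ≠ 0 := by simpa using hf' 0
  have hbn := ascPochhammer_eval_ne_zero hb n
  let g (x : K) (j : ℕ) : K := (ascPochhammer K j).eval x / (ascPochhammer K j).eval b
  have hsplit : (fun j : ℕ ↦ (ascPochhammer K j).eval a * (ascPochhammer K j).eval (d + 1) /
      ((ascPochhammer K j).eval b * (ascPochhammer K j).eval d)) =
      ((d - a) / d) • g a + (a / d) • g (a + 1) := by
    ext j
    rw [mul_div_mul_comm, ascPochhammer_eval_add_one_div hd]
    simp only [g, Pi.add_apply, Pi.smul_apply, smul_eq_mul]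
    linear_combination -(d * (ascPochhammer K j).eval b)⁻¹ * mul_ascPochhammer_eval_add_one a j
  have hshift := mul_ascPochhammer_eval_add_one (b - a - 1) n
  rw [sub_add_cancel] at hshift
  rw [hsplit, fwdDiff_iter_add, fwdDiff_iter_const_smul, fwdDiff_iter_const_smul,
    mul_div_mul_comm, ascPochhammer_eval_add_one_div hf']
  simp only [g, Pi.add_apply, Pi.smul_apply, smul_eq_mul, fwdDiff_iter_ascPochhammer_div _ hb,
    ascPochhammer_zero, Polynomial.eval_one, zero_add, ← sub_sub]
  field_simp
  linear_combination
    ((ascPochhammer K n).eval (b - a) - (ascPochhammer K n).eval (b - a - 1)) * hf + d * hshift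

end Pochhammer

theorem sum_antidiagonal_neg_one_pow_mul_div_factorial {K : Type*} [Field K] [CharZero K]
    (c : ℕ → K) (n : ℕ) :
    ∑ p ∈ antidiagonal n, c p.1 / p.1.factorial * ((-1) ^ p.2 / p.2.factorial) =
      (fwdDiff 1)^[n] c 0 / n.factorial := by
  rw [fwdDiff_iter_eq_sum_shift, Finset.Nat.sum_antidiagonal_eq_sum_range_succ_mk, Finset.sum_div]
  refine Finset.sum_congr rfl fun k hk ↦ ?_
  have hn : (n.factorial : K) ≠ 0 := Nat.cast_ne_zero.2 n.factorial_ne_zero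
  simp only [zsmul_eq_mul, smul_eq_mul, mul_one, zero_add]
  push_cast
  rw [Nat.cast_choose K (Finset.mem_range_succ_iff.1 hk)]
  field_simp

theorem tsum_tsum_eq_tsum_sum_antidiagonal {A E : Type*} [AddMonoid A]
    [Finset.HasAntidiagonal A] [AddCommGroup E] [UniformSpace E] [IsUniformAddGroup E]
    [CompleteSpace E] [T2Space E] {F : A × A → E} (hF : Summable F) :
    ∑' k, ∑' m, F (k, m) = ∑' n, ∑ p ∈ antidiagonal n, F p := by
  let e := Finset.HasAntidiagonal.sigmaAntidiagonalEquivProd (A := A)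
  have he : Summable (F ∘ e) := e.summable_iff.2 hF
  calc ∑' k, ∑' m, F (k, m) = ∑' p, F p := hF.tsum_prod.symm
    _ = ∑' q, F (e q) := (e.tsum_eq F).symm
    _ = ∑' n, ∑' p : antidiagonal n, F p.1 := he.tsum_sigma
    _ = ∑' n, ∑ p ∈ antidiagonal n, F p := by simp only [Finset.tsum_subtype]

section Taylor

variable {E : Type*} [NormedAddCommGroup E] [NormedSpace ℂ E] [CompleteSpace E]
  {φ : ℂ → E} {w z : ℂ} {r : ℝ}

theorem hasSum_taylorSeries_iteratedDeriv (hφ : AnalyticOnNhd ℂ φ (Metric.ball z r))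
    (hw : w ∈ Metric.ball z r) (k : ℕ) :
    HasSum (fun m : ℕ ↦ ((w - z) ^ m / m.factorial) • iteratedDeriv (k + m) φ z)
      (iteratedDeriv k φ w) := by
  have hφk : AnalyticOnNhd ℂ (iteratedDeriv k φ) (Metric.ball z r) := by
    simpa only [iteratedDeriv_eq_iterate] using hφ.iterated_deriv k
  convert Complex.hasSum_taylorSeries_on_ball hφk.differentiableOn hw using 2 with m
  simp only [iteratedDeriv_eq_iterate, add_comm k m, Function.iterate_add_apply, smul_smul,
    div_eq_inv_mul]

theorem tsum_smul_iteratedDeriv_eq_tsum_fwdDiff_smul (hφ : AnalyticOnNhd ℂ φ (Metric.ball z r))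
    (hw : w ∈ Metric.ball z r) (c : ℕ → ℂ)
    (hsum : Summable fun p : ℕ × ℕ ↦ ((z - w) ^ p.1 * (c p.1 / p.1.factorial)) •
      ((w - z) ^ p.2 / p.2.factorial : ℂ) • iteratedDeriv (p.1 + p.2) φ z) :
    ∑' k : ℕ, ((z - w) ^ k * (c k / k.factorial)) • iteratedDeriv k φ w =
      ∑' n : ℕ, ((z - w) ^ n * ((fwdDiff 1)^[n] c 0 / n.factorial)) • iteratedDeriv n φ z := by
  simp_rw [← (hasSum_taylorSeries_iteratedDeriv hφ hw _).tsum_eq, ← tsum_const_smul'']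
  rw [tsum_tsum_eq_tsum_sum_antidiagonal hsum]
  refine tsum_congr fun n ↦ ?_
  rw [← sum_antidiagonal_neg_one_pow_mul_div_factorial, Finset.mul_sum, Finset.sum_smul]
  refine Finset.sum_congr rfl fun p hp ↦ ?_
  rw [← Finset.HasAntidiagonal.mem_antidiagonal.1 hp, smul_smul, ← neg_sub z w, neg_pow, pow_add]
  congr 1
  ring

end Taylor

theorem ramanujan_entry20_generalization_general
    {E : Type*} [NormedAddCommGroup E] [NormedSpace ℂ E] [CompleteSpace E]
    (φ : ℂ → E) (R : ℝ) (hR : 1 < R)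
    (hφ : AnalyticOnNhd ℂ φ (Metric.ball (1 : ℂ) R))
    (a b d f : ℂ)
    (hf : f * (d - a) = d * (b - a - 1))
    (hb : ∀ n : ℕ, b ≠ -(n : ℂ))
    (hd : ∀ n : ℕ, d ≠ -(n : ℂ))
    (hfpos : ∀ n : ℕ, f ≠ -(n : ℂ))
    (hsum : Summable (fun p : ℕ × ℕ =>
      ((poch a p.1 * poch (d + 1) p.1 /
          (poch b p.1 * poch d p.1 * (Nat.factorial p.1 : ℂ))) *
        ((-1 : ℂ) ^ (p.1 + p.2) * poch (-(((p.1 + p.2 : ℕ)) : ℂ)) p.1 /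
          (Nat.factorial (p.1 + p.2) : ℂ))) • iteratedDeriv (p.1 + p.2) φ 1)) :
    ∑' k : ℕ, (poch a k * poch (d + 1) k /
        (poch b k * poch d k * (Nat.factorial k : ℂ))) • iteratedDeriv k φ 0
      = ∑' k : ℕ, ((-1 : ℂ) ^ k * poch (b - a - 1) k * poch (f + 1) k /
          (poch b k * poch f k * (Nat.factorial k : ℂ))) • iteratedDeriv k φ 1 := by
  let c (k : ℕ) : ℂ := poch a k * poch (d + 1) k / (poch b k * poch d k)
  have h0 : (0 : ℂ) ∈ Metric.ball 1 R := by simpa using hR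
  have hc (n : ℕ) : (fwdDiff 1)^[n] c 0 =
      (-1) ^ n * poch (b - a - 1) n * poch (f + 1) n / (poch b n * poch f n) :=
    fwdDiff_iter_ascPochhammer_mul_add_one_div hf hb hd hfpos n
  have hcoeff (k m : ℕ) : (-1 : ℂ) ^ (k + m) * poch (-((k + m : ℕ) : ℂ)) k / (k + m).factorial =
      (-1) ^ m / m.factorial :=
    neg_one_pow_mul_ascPochhammer_eval_neg_div_factorial k m
  simp only [hcoeff, ← div_div _ _ (Nat.factorial _ : ℂ)] at hsum ⊢
  simpa [c, hc] using tsum_smul_iteratedDeriv_eq_tsum_fwdDiff_smul hφ h0 c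
    (by simpa [c, smul_smul] using hsum)

/-- Theorem 1 of the paper (generalization of Ramanujan's Entry 20): with
`f = d(b-a-1)/(d-a)`, if `φ` is analytic on a disk of radius `R > 1` about `1` and the
double series may be summed in either order, then
`Σ_{k≥0} (a)_k (d+1)_k φ^{(k)}(0) / ((b)_k (d)_k k!)
  = Σ_{k≥0} (-1)^k (b-a-1)_k (f+1)_k φ^{(k)}(1) / ((b)_k (f)_k k!)`. -/
theorem ramanujan_entry20_generalization
    (φ : ℂ → ℂ) (R : ℝ) (hR : 1 < R)
    (hφ : AnalyticOnNhd ℂ φ (Metric.ball (1 : ℂ) R))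
    (a b d f : ℂ)
    (hf : f = d * (b - a - 1) / (d - a))
    (hb : ∀ n : ℕ, b ≠ -(n : ℂ))
    (hd : ∀ n : ℕ, d ≠ -(n : ℂ))
    (hda : d ≠ a)
    (hfpos : ∀ n : ℕ, f ≠ -(n : ℂ))
    (hsum : Summable (fun p : ℕ × ℕ =>
      ‖(poch a p.1 * poch (d + 1) p.1 /
          (poch b p.1 * poch d p.1 * (Nat.factorial p.1 : ℂ))) *
        ((-1 : ℂ) ^ (p.1 + p.2) * poch (-(((p.1 + p.2 : ℕ)) : ℂ)) p.1 /
          (Nat.factorial (p.1 + p.2) : ℂ)) * iteratedDeriv (p.1 + p.2) φ 1‖)) :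
    ∑' k : ℕ, poch a k * poch (d + 1) k * iteratedDeriv k φ 0 /
        (poch b k * poch d k * (Nat.factorial k : ℂ))
      = ∑' k : ℕ, (-1 : ℂ) ^ k * poch (b - a - 1) k * poch (f + 1) k *
          iteratedDeriv k φ 1 / (poch b k * poch f k * (Nat.factorial k : ℂ)) := by
  simpa only [smul_eq_mul, mul_div_right_comm] using
    ramanujan_entry20_generalization_general φ R hR hφ a b d f
      (by rw [hf, div_mul_cancel₀ _ (sub_ne_zero.2 hda)]) hb hd hfpos hsum.of_norm
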